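/- For every s ≥ 0 and every factor v of w that has a kernel period q with q ≤ 1966·3^s, one has |v|/q < 35/34 + (3/1966)·∑_{j=0}^{s-1} 3^{-j}. -/

import Mathlib

/-- The four-letter alphabet `A₄ = {1,2,3,4}`; the value `k : Fin 4` represents letter `k+1`. -/
abbrev A4 := Fin 4

/-- The morphism `f` on letters: `f(1)=121, f(2)=123, f(3)=141, f(4)=142`
(letters `1,2,3,4` encoded as `0,1,2,3`). -/
def fm : A4 → List A4
  | 0 => [0, 1, 0]
  | 1 => [0, 1, 2]
  | 2 => [0, 3, 0]
  | 3 => [0, 3, 1]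

/-- The morphism `f` extended to words by concatenation. -/
def fw (u : List A4) : List A4 := u.flatMap fm

/-- The fixed point `w` of `f` starting with the letter `1`: since `|f^k(1)| = 3^k` and each
`f^k(1)` is a prefix of `f^(k+1)(1)`, the `n`-th letter of `w` is the `n`-th letter of
`f^(n+1)(1)`. -/
def w (n : ℕ) : A4 := ((fw^[n + 1]) [0]).getD n 0

/-- The finite word `t` occurs at position `i` in the infinite word `x`. -/
def OccursAt {α : Type*} (t : List α) (x : ℕ → α) (i : ℕ) : Prop :=
  t = (List.range t.length).map fun k => x (i + k)

/-- The finite word `v` is a factor of the infinite word `x`. -/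
def FactorOf {α : Type*} (v : List α) (x : ℕ → α) : Prop :=
  ∃ i, OccursAt v x i

/-- The finite word `v` has period `q ≥ 1`: `v(j) = v(j+q)` whenever `0 ≤ j < |v| - q`. -/
def HasPeriod {α : Type*} (v : List α) (q : ℕ) : Prop :=
  1 ≤ q ∧ ∀ j, j + q < v.length → v[j]? = v[j + q]?

/-- A word lies in `ker ψ` if each letter of `A₄` occurs in it a number of times
divisible by `4`. -/
def InKerPsi (u : List A4) : Prop := ∀ a : A4, 4 ∣ u.count a

/-- `q` is a kernel period of `v`: `1 ≤ q ≤ |v|`, `v` has period `q`, and the prefix of `v`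
of length `q` lies in `ker ψ`. -/
def KernelPeriod (v : List A4) (q : ℕ) : Prop :=
  q ≤ v.length ∧ HasPeriod v q ∧ InKerPsi (v.take q)

/-!
A window of length `q` that slides along `w` by one letter stays in `ker ψ` exactly when the letter
that leaves equals the letter that enters. A factor of length `q + e` with kernel period `q` is
therefore the same as `e + 1` consecutive windows of length `q` in `ker ψ`.

The letters of `w` at positions divisible by `3` are all equal and never occur at positions
congruent to `1` modulo `3`, so `e ≥ 3` forces `q = 3m`. The incidence matrix of `f` is invertible
modulo `4`, so `f` preserves and reflects `ker ψ`, and the factor desubstitutes to one with kernel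
period `m` and excess `e'`, where `e ≤ 3e' + 3`. Each such step costs at most `3/q` in the ratio
`e/q`, which is less than `(3/1966)·3^{-s}` as long as `q > 1966·3^s`. For the remaining periods
`q ≤ 1966` a computation shows `34e < q`: every factor of length at most `3^7 + 1` occurs in one
explicit word of length `9·3^7`, whose windows are all examined at once by bitwise operations on the
packed table of its prefix counts.
-/

open Finset Matrix

section Factors

variable {α : Type*} (x : ℕ → α)

/-- The factor of length `n` of the infinite word `x` that starts at position `i`. -/
def factor (i n : ℕ) : List α := (List.range n).map fun k => x (i + k)

@[simp]
theorem length_factor (i n : ℕ) : (factor x i n).length = n := by simp [factor]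

theorem factor_one (i : ℕ) : factor x i 1 = [x i] := rfl

theorem factor_add (i m n : ℕ) : factor x i (m + n) = factor x i m ++ factor x (i + m) n := by
  simp only [factor, List.range_add, List.map_append, List.map_map, Function.comp_def, add_assoc]

theorem take_drop_factor {i j m n : ℕ} (h : j + m ≤ n) :
    ((factor x i n).drop j).take m = factor x (i + j) m := by
  obtain ⟨k, rfl⟩ := Nat.exists_eq_add_of_le h
  rw [add_assoc, factor_add, factor_add, List.drop_left' (length_factor ..),
    List.take_left' (length_factor ..)]

end Factors

section Parikh

/-- The Parikh vector modulo `4`: the morphism `ψ` whose kernel `InKerPsi` describes. -/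
def parikh (u : List A4) : A4 → ZMod 4 := fun a => (u.count a : ZMod 4)

theorem inKerPsi_iff_parikh_eq_zero {u : List A4} : InKerPsi u ↔ parikh u = 0 := by
  simp only [InKerPsi, funext_iff, parikh, Pi.zero_apply, ZMod.natCast_eq_zero_iff]

theorem parikh_append (u v : List A4) : parikh (u ++ v) = parikh u + parikh v := by
  ext a; simp [parikh]

theorem parikh_singleton (x : A4) : parikh [x] = Pi.single x 1 := by
  ext a; revert x a; decide

theorem InKerPsi.four_dvd_length {u : List A4} (h : InKerPsi u) : 4 ∣ u.length := by
  rw [← Multiset.coe_card, ← Multiset.sum_count_eq_card (s := univ) fun a _ => mem_univ a]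
  exact dvd_sum fun a _ => by simpa using h a

theorem parikh_factor_succ (x : ℕ → A4) (i q : ℕ) :
    Pi.single (x i) 1 + parikh (factor x (i + 1) q)
      = parikh (factor x i q) + Pi.single (x (i + q)) 1 := by
  simp only [← parikh_singleton, ← factor_one, ← parikh_append, ← factor_add, add_comm 1 q]

variable {x : ℕ → A4} {i q e : ℕ}

theorem inKerPsi_factor_succ_iff (h : x i = x (i + q)) :
    InKerPsi (factor x (i + 1) q) ↔ InKerPsi (factor x i q) := by
  have key := parikh_factor_succ x i q
  rw [← h, add_comm, add_left_inj] at key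
  rw [inKerPsi_iff_parikh_eq_zero, inKerPsi_iff_parikh_eq_zero, key]

theorem eq_of_inKerPsi_factor_succ (h : InKerPsi (factor x i q))
    (h' : InKerPsi (factor x (i + 1) q)) : x i = x (i + q) := by
  have key := parikh_factor_succ x i q
  rw [inKerPsi_iff_parikh_eq_zero.1 h, inKerPsi_iff_parikh_eq_zero.1 h', add_zero, zero_add] at key
  by_contra hne
  have hone : (1 : ZMod 4) = 0 := by simpa [hne] using congrFun key (x i)
  exact absurd hone (by decide)

/-- `x` contains a factor of length `q + e` with kernel period `q`, encoded by `e + 1` consecutive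
factors of length `q` in `ker ψ`. The number `e` is called the excess. -/
def HasKernelRun (x : ℕ → A4) (q e : ℕ) : Prop :=
  ∃ i, ∀ n ∈ Set.Icc i (i + e), InKerPsi (factor x n q)

theorem HasKernelRun.mono {d : ℕ} (h : HasKernelRun x q e) (hde : d ≤ e) : HasKernelRun x q d :=
  let ⟨i, hi⟩ := h
  ⟨i, fun n hn => hi n ⟨hn.1, hn.2.trans (by omega)⟩⟩

theorem HasKernelRun.four_dvd (h : HasKernelRun x q e) : 4 ∣ q := by
  obtain ⟨i, hi⟩ := h
  simpa using (hi i ⟨le_rfl, i.le_add_right e⟩).four_dvd_length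

theorem KernelPeriod.hasKernelRun {v : List A4} (hfac : FactorOf v x) (h : KernelPeriod v q) :
    HasKernelRun x q (v.length - q) := by
  obtain ⟨i, hocc⟩ := hfac
  obtain ⟨hqv, ⟨-, hper⟩, hker⟩ := h
  have hv : v = factor x i v.length := hocc
  have hget {k : ℕ} (hk : k < v.length) : v[k]? = some (x (i + k)) := by
    rw [hv]; simp [factor, hk]
  refine ⟨i, fun n hn => ?_⟩
  induction n, hn.1 using Nat.le_induction with
  | base => rwa [hv, ← List.drop_zero (l := factor _ _ _), take_drop_factor _ (by omega)] at hker
  | succ n hin ih =>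
    obtain ⟨j, rfl⟩ := Nat.exists_eq_add_of_le hin
    have hj : i + j + 1 ≤ i + (v.length - q) := hn.2
    have hletter := hper j (by omega)
    rw [hget (by omega), hget (by omega), Option.some_inj, ← add_assoc] at hletter
    exact (inKerPsi_factor_succ_iff hletter).2 (ih ⟨hin, by omega⟩)

end Parikh

section FixedPoint

theorem iterate_fw_eq_flatMap (k : ℕ) (u : List A4) : fw^[k] u = u.flatMap fun x => fw^[k] [x] := by
  induction k generalizing u with
  | zero => simp
  | succ k ih =>
    simp only [Function.iterate_succ', Function.comp_apply]
    rw [ih u]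
    simp only [fw, List.flatMap_assoc]

theorem iterate_fw_append (k : ℕ) (u v : List A4) :
    fw^[k] (u ++ v) = fw^[k] u ++ fw^[k] v := by
  rw [iterate_fw_eq_flatMap, List.flatMap_append, ← iterate_fw_eq_flatMap,
    ← iterate_fw_eq_flatMap]

theorem length_fm (x : A4) : (fm x).length = 3 := by revert x; decide

theorem length_fw (u : List A4) : (fw u).length = 3 * u.length := by
  induction u with
  | nil => rfl
  | cons x u ih =>
    have hx := length_fm x
    simp only [fw, List.flatMap_cons, List.length_append, List.length_cons] at ih ⊢
    omega

theorem length_iterate_fw (k : ℕ) (u : List A4) : (fw^[k] u).length = 3 ^ k * u.length := by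
  induction k with
  | zero => simp
  | succ k ih => rw [Function.iterate_succ_apply', length_fw, ih, pow_succ']; ring

theorem getElem?_fw (u : List A4) (n : ℕ) {r : ℕ} (hr : r < 3) :
    (fw u)[3 * n + r]? = u[n]?.bind fun x => (fm x)[r]? := by
  induction u generalizing n with
  | nil => simp [fw]
  | cons x u ih =>
    have hx := length_fm x
    rw [fw, List.flatMap_cons]
    cases n with
    | zero => rw [List.getElem?_append_left (by omega)]; simp
    | succ n =>
      rw [List.getElem?_append_right (by omega), hx, List.getElem?_cons_succ, ← ih, fw]
      congr 1; omega

theorem iterate_fw_prefix {m n : ℕ} (h : m ≤ n) : fw^[m] [0] <+: fw^[n] [0] := by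
  induction n, h using Nat.le_induction with
  | base => exact List.prefix_rfl
  | succ n _ ih =>
    refine ih.trans ?_
    rw [Function.iterate_succ_apply, show fw [0] = [0] ++ [1, 0] from rfl, iterate_fw_append]
    exact List.prefix_append ..

theorem getElem?_iterate_fw {k n : ℕ} (h : n < 3 ^ k) : (fw^[k] [0])[n]? = some (w n) := by
  have hlen (m : ℕ) : (fw^[m] [0]).length = 3 ^ m := by simp [length_iterate_fw]
  have hn : n < 3 ^ (n + 1) := n.lt_succ_self.trans (Nat.lt_pow_self (by norm_num))
  have hw : w n = (fw^[n + 1] [0])[n]'(by rwa [hlen]) := List.getD_eq_getElem _ _ _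
  rw [List.getElem?_eq_getElem (by rwa [hlen]), hw, Option.some_inj]
  rcases le_total k (n + 1) with hk | hk
  · exact (iterate_fw_prefix hk).getElem _
  · exact ((iterate_fw_prefix hk).getElem _).symm

theorem factor_w_three (n : ℕ) : factor w (3 * n) 3 = fm (w n) := by
  have hn : n < 3 ^ n := Nat.lt_pow_self (by norm_num)
  refine List.ext_getElem? fun r => ?_
  rcases lt_or_ge r 3 with hr | hr
  · have hw : some (w (3 * n + r)) = (fm (w n))[r]? := by
      rw [← getElem?_iterate_fw (k := n + 1) (by rw [pow_succ]; omega),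
        Function.iterate_succ_apply', getElem?_fw _ _ hr, getElem?_iterate_fw hn, Option.bind_some]
    simp [factor, hr, hw]
  · rw [List.getElem?_eq_none (by simpa), List.getElem?_eq_none (by rwa [length_fm])]

theorem w_three_mul (n : ℕ) : w (3 * n) = 0 := by
  have h : [w (3 * n), w (3 * n + 1), w (3 * n + 2)] = fm (w n) := factor_w_three n
  generalize w (3 * n) = a, w (3 * n + 1) = b, w (3 * n + 2) = c, w n = x at h ⊢
  decide +revert

theorem w_three_mul_add_one (n : ℕ) : w (3 * n + 1) = 1 ∨ w (3 * n + 1) = 3 := by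
  have h : [w (3 * n), w (3 * n + 1), w (3 * n + 2)] = fm (w n) := factor_w_three n
  generalize w (3 * n) = a, w (3 * n + 1) = b, w (3 * n + 2) = c, w n = x at h ⊢
  decide +revert

theorem fw_factor (i n : ℕ) : fw (factor w i n) = factor w (3 * i) (3 * n) := by
  induction n with
  | zero => rfl
  | succ n ih =>
    rw [factor_add, fw, List.flatMap_append, ← fw, ih, factor_one, List.flatMap_singleton,
      ← factor_w_three, mul_add 3 n, factor_add, mul_add]

theorem iterate_fw_factor (k i n : ℕ) :
    fw^[k] (factor w i n) = factor w (3 ^ k * i) (3 ^ k * n) := by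
  induction k with
  | zero => simp
  | succ k ih => rw [Function.iterate_succ_apply', ih, fw_factor, pow_succ', mul_assoc, mul_assoc]

end FixedPoint

section Descent

/-- The incidence matrix of `f` modulo `4`: column `b` is the Parikh vector of `f(b)`. -/
def incidence : Matrix A4 A4 (ZMod 4) := Matrix.of fun a b => parikh (fm b) a

theorem parikh_fw (u : List A4) : parikh (fw u) = incidence *ᵥ parikh u := by
  induction u with
  | nil => decide
  | cons x u ih =>
    rw [← List.singleton_append, fw, List.flatMap_append, ← fw, ← fw, parikh_append, ih,
      parikh_append, mulVec_add, parikh_singleton, mulVec_single_one, fw, List.flatMap_singleton]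
    rfl

theorem det_incidence : incidence.det = -1 := by decide

theorem inKerPsi_fw_iff {u : List A4} : InKerPsi (fw u) ↔ InKerPsi u := by
  have hinj : Function.Injective incidence.mulVec :=
    mulVec_injective_of_isUnit <| (isUnit_iff_isUnit_det _).2 <| det_incidence ▸ isUnit_one.neg
  rw [inKerPsi_iff_parikh_eq_zero, inKerPsi_iff_parikh_eq_zero, parikh_fw,
    hinj.eq_iff' (mulVec_zero _)]

theorem inKerPsi_factor_three_mul {n m : ℕ} :
    InKerPsi (factor w (3 * n) (3 * m)) ↔ InKerPsi (factor w n m) := by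
  rw [← fw_factor, inKerPsi_fw_iff]

theorem inKerPsi_factor_three_mul_add_one {n m : ℕ} :
    InKerPsi (factor w (3 * n + 1) (3 * m)) ↔ InKerPsi (factor w n m) := by
  rw [inKerPsi_factor_succ_iff (by rw [← mul_add, w_three_mul, w_three_mul]),
    inKerPsi_factor_three_mul]

theorem HasKernelRun.of_three_mul {m e : ℕ} (h : HasKernelRun w (3 * m) (3 * e + 1)) :
    HasKernelRun w m e := by
  obtain ⟨i, hi⟩ := h
  refine ⟨(i + 1) / 3, fun k hk => ?_⟩
  rw [Set.mem_Icc] at hk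
  rcases le_or_gt i (3 * k) with hle | hlt
  · exact inKerPsi_factor_three_mul.1 (hi _ ⟨hle, by omega⟩)
  · exact inKerPsi_factor_three_mul_add_one.1 (hi _ ⟨by omega, by omega⟩)

theorem w_three_mul_ne (m n : ℕ) : w (3 * m) ≠ w (3 * n + 1) := by
  rw [w_three_mul]
  rcases w_three_mul_add_one n with h | h <;> rw [h] <;> decide

theorem HasKernelRun.three_dvd {q : ℕ} (h : HasKernelRun w q 3) : 3 ∣ q := by
  obtain ⟨i, hi⟩ := h
  have hper {n : ℕ} (hn : i ≤ n) (hn' : n < i + 3) : w n = w (n + q) :=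
    eq_of_inKerPsi_factor_succ (hi n ⟨hn, by omega⟩) (hi (n + 1) ⟨by omega, by omega⟩)
  obtain ⟨m, hm⟩ : ∃ m, q = 3 * m ∨ q = 3 * m + 1 ∨ q = 3 * m + 2 := ⟨q / 3, by omega⟩
  rcases hm with rfl | rfl | rfl
  · exact dvd_mul_right 3 m
  · refine absurd (hper (n := 3 * ((i + 2) / 3)) (by omega) (by omega)) ?_
    rw [← add_assoc, ← mul_add]
    exact w_three_mul_ne _ _
  · refine absurd (hper (n := 3 * ((i + 1) / 3) + 1) (by omega) (by omega)) ?_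
    rw [show 3 * ((i + 1) / 3) + 1 + (3 * m + 2) = 3 * ((i + 1) / 3 + m + 1) by ring]
    exact (w_three_mul_ne _ _).symm

theorem HasKernelRun.exists_eq_three_mul {q e : ℕ} (h : HasKernelRun w q e) (he : 3 ≤ e) :
    ∃ m, q = 3 * m ∧ HasKernelRun w m ((e - 1) / 3) := by
  obtain ⟨m, rfl⟩ := (h.mono he).three_dvd
  exact ⟨m, rfl, (h.mono (by omega)).of_three_mul⟩

end Descent

section Cover

/-- A word containing every factor of length `2` of `w`. -/
def pairCover : List A4 := [3, 1, 2, 0, 0, 1, 0, 3, 0]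

theorem factor_w_two_infix (i : ℕ) : factor w i 2 <:+: pairCover := by
  have hblock : factor w (3 * (i / 3)) 4 = fm (w (i / 3)) ++ [0] := by
    rw [factor_add w _ 3 1, factor_w_three, factor_one, ← mul_add_one, w_three_mul]
  have hcover : ∀ x : A4, ∀ r < 3, ((fm x ++ [0]).drop r).take 2 <:+: pairCover := by decide
  rw [← Nat.div_add_mod i 3, ← take_drop_factor w (n := 4) (by omega), hblock]
  exact hcover _ _ (i.mod_lt (by norm_num))

theorem factor_w_infix {k n : ℕ} (i : ℕ) (hn : n ≤ 3 ^ k + 1) :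
    factor w i n <:+: fw^[k] pairCover := by
  have hr : i % 3 ^ k < 3 ^ k := i.mod_lt (by positivity)
  have hpair : fw^[k] (factor w (i / 3 ^ k) 2) <:+: fw^[k] pairCover := by
    rw [iterate_fw_eq_flatMap k pairCover, iterate_fw_eq_flatMap]
    exact (factor_w_two_infix _).flatMap _
  rw [← Nat.div_add_mod i (3 ^ k), ← take_drop_factor w (n := 3 ^ k * 2) (by omega),
    ← iterate_fw_factor]
  exact (List.take_prefix ..).isInfix.trans ((List.drop_suffix ..).isInfix.trans hpair)

theorem InKerPsi.count_take_modEq {u : List A4} {m q : ℕ} (h : InKerPsi ((u.drop m).take q))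
    (a : A4) : (u.take m).count a ≡ (u.take (m + q)).count a [MOD 4] := by
  rw [List.take_add, List.count_append]
  exact (Nat.modEq_iff_dvd' (Nat.le_add_right ..)).2 (by simpa using h a)

theorem HasKernelRun.exists_count_modEq {x : ℕ → A4} {q e : ℕ} {u : List A4}
    (h : HasKernelRun x q e) (hu : ∀ i, factor x i (q + e + 1) <:+: u) :
    ∃ n < u.length - (q + e), ∀ m ∈ Set.Icc n (n + e), ∀ a,
      (u.take m).count a ≡ (u.take (m + q)).count a [MOD 4] := by
  obtain ⟨i, hi⟩ := h
  obtain ⟨s, t, rfl⟩ := hu i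
  refine ⟨s.length, by simp only [List.length_append, length_factor]; omega, fun m hm =>
    InKerPsi.count_take_modEq ?_⟩
  rw [Set.mem_Icc] at hm
  obtain ⟨j, rfl⟩ := Nat.exists_eq_add_of_le hm.1
  rw [List.append_assoc, List.drop_length_add_append,
    List.drop_append_of_le_length (by rw [length_factor]; omega),
    List.take_append_of_le_length (by rw [List.length_drop, length_factor]; omega),
    take_drop_factor _ (by omega)]
  exact hi _ ⟨by omega, by omega⟩

end Cover

section BitParallel

/-- The number whose digits in base `2 ^ b`, least significant first, are `s 0, …, s (L - 1)`. -/
def packDigits (b : ℕ) (s : ℕ → ℕ) (L : ℕ) : ℕ := ∑ n ∈ range L, s n * 2 ^ (b * n)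

theorem packDigits_succ (b : ℕ) (s : ℕ → ℕ) (L : ℕ) :
    packDigits b s (L + 1) = 2 ^ b * packDigits b (fun n => s (n + 1)) L + s 0 := by
  rw [packDigits, sum_range_succ', packDigits, mul_sum]
  simp only [mul_zero, pow_zero, mul_one]
  congr 1
  exact sum_congr rfl fun n _ => by ring

theorem packDigits_add (b : ℕ) (s : ℕ → ℕ) (L M : ℕ) :
    packDigits b s (L + M)
      = packDigits b s L + 2 ^ (b * L) * packDigits b (fun n => s (L + n)) M := by
  rw [packDigits, sum_range_add, packDigits, packDigits, mul_sum]
  congr 1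
  exact sum_congr rfl fun n _ => by ring

theorem testBit_packDigits {b L : ℕ} {s : ℕ → ℕ} (hs : ∀ n < L, s n < 2 ^ b) {n t : ℕ}
    (hn : n < L) (ht : t < b) : (packDigits b s L).testBit (b * n + t) = (s n).testBit t := by
  induction L generalizing n s with
  | zero => omega
  | succ L ih =>
    rw [packDigits_succ, Nat.testBit_two_pow_mul_add _ (hs 0 L.succ_pos)]
    cases n with
    | zero => rw [if_pos (by omega), mul_zero, zero_add]
    | succ n =>
      rw [if_neg (by rw [mul_add_one]; omega), ← ih (fun i hi => hs (i + 1) (by omega)) (by omega)]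
      congr 1
      rw [mul_add_one]; omega

/-- The number with `L` digits equal to `1` in base `2 ^ b`, in closed form; it is meaningful only
for `0 < b`. -/
def repunit (b L : ℕ) : ℕ := (2 ^ (b * L) - 1) / (2 ^ b - 1)

theorem repunit_eq_packDigits {b : ℕ} (hb : 0 < b) (L : ℕ) :
    repunit b L = packDigits b (fun _ => 1) L := by
  simp only [repunit, packDigits, one_mul, pow_mul]
  exact (Nat.geomSum_eq (Nat.one_lt_two_pow hb.ne') L).symm

theorem testBit_of_and_repunit {b L z n : ℕ} (hb : 0 < b)
    (hz : z &&& repunit b L = repunit b L) (hn : n < L) : z.testBit (b * n) := by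
  have hbit : (repunit b L).testBit (b * n) := by
    rw [repunit_eq_packDigits hb, ← add_zero (b * n), testBit_packDigits _ hn hb]
    · decide
    · exact fun _ _ => Nat.one_lt_two_pow hb.ne'
  rw [← hz, Nat.testBit_and, Bool.and_eq_true] at hbit
  exact hbit.1

/-- The bitwise disjunction of the shifts of `d` to the right by `0, s, …, e * s` bits. -/
def orShifts (d s : ℕ) : ℕ → ℕ
  | 0 => d
  | e + 1 => d ||| (orShifts d s e >>> s)

theorem testBit_orShifts {d s e i : ℕ} :
    (orShifts d s e).testBit i ↔ ∃ j ≤ e, d.testBit (i + s * j) := by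
  induction e generalizing i with
  | zero => simp [orShifts]
  | succ e ih =>
    rw [orShifts, Nat.testBit_or, Bool.or_eq_true, Nat.testBit_shiftRight, ih]
    constructor
    · rintro (h | ⟨j, hj, h⟩)
      · exact ⟨0, by omega, by simpa using h⟩
      · exact ⟨j + 1, by omega, by rwa [show i + s * (j + 1) = s + i + s * j by ring]⟩
    · rintro ⟨j, hj, h⟩
      cases j with
      | zero => exact .inl (by simpa using h)
      | succ j => exact .inr ⟨j, by omega, by rwa [show s + i + s * j = i + s * (j + 1) by ring]⟩

theorem testBit_xor_shiftRight_packDigits {b L q n t : ℕ} {s : ℕ → ℕ}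
    (hs : ∀ n < L, s n < 2 ^ b) (hn : n + q < L) (ht : t < b) :
    (packDigits b s L ^^^ packDigits b s L >>> (b * q)).testBit (b * n + t)
      = ((s n).testBit t ^^ (s (n + q)).testBit t) := by
  rw [Nat.testBit_xor, Nat.testBit_shiftRight, testBit_packDigits hs (by omega) ht,
    show b * q + (b * n + t) = b * (n + q) + t by ring, testBit_packDigits hs hn ht]

theorem testBit_eq_of_modEq {m n k t : ℕ} (h : m ≡ n [MOD 2 ^ k]) (ht : t < k) :
    m.testBit t = n.testBit t := by
  have hbit (l : ℕ) : (l % 2 ^ k).testBit t = l.testBit t := by simp [Nat.testBit_mod_two_pow, ht]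
  rw [← hbit m, ← hbit n, h]

end BitParallel

section CountTables

/-- The length of a word, the number of its occurrences of a fixed letter, and the table of the
numbers of occurrences in its proper prefixes, packed into 16-bit digits. -/
@[ext]
structure CountTable where
  length : ℕ
  count : ℕ
  packed : ℕ

namespace CountTable

/-- The table of the letter `a` for the word `u`. -/
def ofWord (a : A4) (u : List A4) : CountTable where
  length := u.length
  count := u.count a
  packed := packDigits 16 (fun n => (u.take n).count a) u.length

/-- The operation on tables that corresponds to the concatenation of words. -/
def append (s t : CountTable) : CountTable where
  length := s.length + t.length
  count := s.count + t.count
  packed := s.packed + 2 ^ (16 * s.length) * (s.count * repunit 16 t.length + t.packed)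

/-- The operation on tables that corresponds to the concatenation of a list of words. -/
def concat (l : List CountTable) : CountTable := l.foldr append ⟨0, 0, 0⟩

/-- The table of `a` for `f^k(x)`. -/
def iterateImage (a : A4) : ℕ → A4 → CountTable
  | 0, x => ⟨1, if x = a then 1 else 0, 0⟩
  | k + 1, x => concat ((fm x).map (iterateImage a k))

theorem ofWord_append (a : A4) (u v : List A4) :
    ofWord a (u ++ v) = (ofWord a u).append (ofWord a v) := by
  ext
  · exact List.length_append
  · exact List.count_append
  · simp only [ofWord, append, List.length_append, packDigits_add]
    rw [repunit_eq_packDigits (by norm_num)]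
    simp only [packDigits, mul_sum, ← sum_add_distrib]
    congr 1
    · refine sum_congr rfl fun n hn => ?_
      rw [List.take_append_of_le_length (mem_range.1 hn).le]
    · refine sum_congr rfl fun n _ => ?_
      rw [List.take_length_add_append, List.count_append]
      ring

theorem concat_map_ofWord (a : A4) (g : A4 → List A4) (u : List A4) :
    concat (u.map fun x => ofWord a (g x)) = ofWord a (u.flatMap g) := by
  induction u with
  | nil => rfl
  | cons x u ih =>
    rw [List.flatMap_cons, ofWord_append, ← ih]
    rfl

theorem iterateImage_eq_ofWord (a : A4) (k : ℕ) (x : A4) :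
    iterateImage a k x = ofWord a (fw^[k] [x]) := by
  induction k generalizing x with
  | zero => simp [iterateImage, ofWord, packDigits, List.count_singleton]
  | succ k ih =>
    rw [iterateImage, funext ih, concat_map_ofWord, ← iterate_fw_eq_flatMap,
      Function.iterate_succ_apply, fw, List.flatMap_singleton]

end CountTable

end CountTables

section Check

/-- The table of the letter `a` for the word `f^7(pairCover)`, in packed form. Its entries fit into
16 bits because `9·3^7 < 2^16`. -/
def coverCounts (a : A4) : ℕ :=
  (CountTable.concat (pairCover.map (CountTable.iterateImage a 7))).packed

theorem coverCounts_eq (a : A4) :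
    coverCounts a = (CountTable.ofWord a (fw^[7] pairCover)).packed := by
  rw [coverCounts, funext (CountTable.iterateImage_eq_ofWord a 7), CountTable.concat_map_ofWord,
    ← iterate_fw_eq_flatMap]

/-- The bits in which the digits `n` and `n + q` of the table of `a` differ. -/
def countMismatch (q : ℕ) (a : A4) : ℕ := coverCounts a ^^^ coverCounts a >>> (16 * q)

/-- The bits in which the digits `n` and `n + q` of one of the four tables differ. -/
def mismatch (q : ℕ) : ℕ :=
  countMismatch q 0 ||| countMismatch q 1 ||| countMismatch q 2 ||| countMismatch q 3

/-- Bit `16 * n` of `runMismatch q e` tells whether, for some `m` with `n ≤ m ≤ n + e`, the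
factor of length `q` of `f^7(pairCover)` at position `m` lies outside `ker ψ`. The outer disjunction
merges the two lowest bits of each digit, which determine the counts modulo `4`. -/
def runMismatch (q e : ℕ) : ℕ := orShifts (orShifts (mismatch q) 16 e) 1 1

theorem testBit_mismatch {q i : ℕ} :
    (mismatch q).testBit i ↔ ∃ a, (countMismatch q a).testBit i := by
  simp [mismatch, Fin.exists_fin_succ, or_assoc]

theorem length_iterate_fw_pairCover : (fw^[7] pairCover).length = 9 * 3 ^ 7 := by
  rw [length_iterate_fw]; decide

theorem testBit_countMismatch_eq_false {q n t : ℕ} {a : A4} (hn : n + q < 9 * 3 ^ 7) (ht : t < 2)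
    (h : ((fw^[7] pairCover).take n).count a ≡ ((fw^[7] pairCover).take (n + q)).count a [MOD 4]) :
    (countMismatch q a).testBit (16 * n + t) = false := by
  have hlen := length_iterate_fw_pairCover
  have hcount : ∀ n < (fw^[7] pairCover).length,
      ((fw^[7] pairCover).take n).count a < 2 ^ 16 := fun n hn =>
    (List.count_le_length.trans (List.length_take_le ..)).trans_lt
      (hn.trans (by rw [hlen]; norm_num))
  rw [countMismatch, coverCounts_eq, CountTable.ofWord,
    testBit_xor_shiftRight_packDigits hcount (by rwa [hlen]) (by omega),
    testBit_eq_of_modEq (k := 2) h ht, Bool.xor_self]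

theorem HasKernelRun.runMismatch_and_repunit_ne {q e : ℕ} (h : HasKernelRun w q e)
    (hqe : q + e ≤ 3 ^ 7) :
    runMismatch q e &&& repunit 16 (9 * 3 ^ 7 - (q + e)) ≠ repunit 16 (9 * 3 ^ 7 - (q + e)) := by
  intro hcheck
  obtain ⟨n, hn, hmod⟩ := h.exists_count_modEq fun i => factor_w_infix (k := 7) i (by omega)
  rw [length_iterate_fw_pairCover] at hn
  have hbit := testBit_of_and_repunit (by norm_num) hcheck hn
  rw [runMismatch] at hbit
  obtain ⟨t, ht, hbit⟩ := testBit_orShifts.1 hbit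
  obtain ⟨j, hj, hbit⟩ := testBit_orShifts.1 hbit
  obtain ⟨a, hbit⟩ := testBit_mismatch.1 hbit
  rw [show 16 * n + 1 * t + 16 * j = 16 * (n + j) + t by ring,
    testBit_countMismatch_eq_false (by omega) (by omega)
      (hmod (n + j) ⟨by omega, by omega⟩ a)] at hbit
  exact Bool.false_ne_true hbit

-- `(q + 33) / 34` is `⌈q / 34⌉`, the least excess to exclude. For `q > 102` it is at least `4`, so
-- that such a run forces `3 ∣ q`.
theorem runMismatch_and_repunit :
    ∀ q < 1967, 0 < q → 4 ∣ q → (102 < q → 3 ∣ q) →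
      runMismatch q ((q + 33) / 34) &&& repunit 16 (9 * 3 ^ 7 - (q + (q + 33) / 34))
        = repunit 16 (9 * 3 ^ 7 - (q + (q + 33) / 34)) := by
  decide +kernel

theorem HasKernelRun.excess_lt {q e : ℕ} (h : HasKernelRun w q e) (hpos : 0 < q)
    (hq : q ≤ 1966) : 34 * e < q := by
  by_contra! hle
  have hrun : HasKernelRun w q ((q + 33) / 34) := h.mono (by omega)
  refine hrun.runMismatch_and_repunit_ne (by omega)
    (runMismatch_and_repunit q (by omega) hpos hrun.four_dvd ?_)
  exact fun hlarge => (hrun.mono (by omega)).three_dvd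

end Check

section Excess

theorem HasKernelRun.excess_div_lt {s q e : ℕ} (h : HasKernelRun w q e) (hpos : 0 < q)
    (hq : q ≤ 1966 * 3 ^ s) :
    (e : ℚ) / q < 1 / 34 + 3 / 1966 * ∑ j ∈ range s, ((3 : ℚ) ^ j)⁻¹ := by
  induction s generalizing q e with
  | zero =>
    have hlt : (34 * e : ℚ) < q := mod_cast h.excess_lt hpos (by simpa using hq)
    rw [range_zero, sum_empty, div_lt_iff₀ (by positivity)]
    linarith
  | succ s ih =>
    rw [sum_range_succ, mul_add, ← add_assoc]
    rcases le_or_gt q (1966 * 3 ^ s) with hle | hgt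
    · exact (ih h hpos hle).trans_le (le_add_of_nonneg_right (by positivity))
    have hthree : (3 : ℚ) / q < 3 / 1966 * (3 ^ s)⁻¹ := by
      rw [← div_eq_mul_inv, div_div]
      exact div_lt_div_of_pos_left (by norm_num) (by positivity) (mod_cast hgt)
    rcases lt_or_ge e 3 with he | he
    · have hsmall : (e : ℚ) / q ≤ 3 / q := by gcongr; exact_mod_cast he.le
      exact (hsmall.trans_lt hthree).trans_le (le_add_of_nonneg_left (by positivity))
    obtain ⟨m, rfl, hrun⟩ := h.exists_eq_three_mul he
    have hm : 0 < m := by omega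
    have hsplit : (e : ℚ) / (3 * m : ℕ) ≤ ((e - 1) / 3 : ℕ) / m + 3 / (3 * m : ℕ) := by
      have he' : (e : ℚ) ≤ 3 * ((e - 1) / 3 : ℕ) + 3 := mod_cast (by omega)
      push_cast at he' ⊢
      rw [← mul_div_mul_left _ (m : ℚ) three_ne_zero, ← add_div]
      gcongr
    have hrec := ih hrun hm (by rw [pow_succ] at hq; omega)
    linarith

end Excess

/-- For every `s ≥ 0` and every factor `v` of `w` having a kernel period `q ≤ 1966·3^s`,
`|v|/q < 35/34 + (3/1966)·∑_{j=0}^{s-1} 3^{-j}`. -/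
theorem stmt0 (s : ℕ) (v : List A4) (q : ℕ)
    (hfac : FactorOf v w) (hker : KernelPeriod v q) (hq : q ≤ 1966 * 3 ^ s) :
    (v.length : ℚ) / q < 35 / 34 + (3 / 1966) * ∑ j ∈ Finset.range s, ((3 : ℚ) ^ j)⁻¹ := by
  have hpos : 0 < q := hker.2.1.1
  have hexcess := (hker.hasKernelRun hfac).excess_div_lt hpos hq
  rw [Nat.cast_sub hker.1, sub_div, div_self (by positivity)] at hexcess
  linarith
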